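/- Let K be an algebraically closed field and let n ≥ 1. Let f₁, …, fₙ be nonzero polynomials in n variables over K (elements of MvPolynomial (Fin n) K). If their common zero set Z = {p : Fin n → K | fᵢ(p) = 0 for all i} is finite, then the cardinality of Z is at most the product of the total degrees of the fᵢ, i.e. Z.ncard ≤ ∏ᵢ totalDegree(fᵢ). -/

import Mathlib

/-!
Write `d i` for the degree of `f i`, and join `f`, at `t = 0`, to the system `X i ^ d i`, at
`t = 1`, by a straight line over `K[t]`. Modulo the system at `t = 1`, the `∏ d i` monomials with
exponents below `d` span all polynomials. By Nakayama's lemma they still do so, in bounded degree,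
after inverting some `r` with `r(1) ≠ 0`; hence every polynomial `u` satisfies a relation `P(u) = 0`
of degree at most `∏ d i` on the deformed system, up to a nonzero factor from `K[t]`, which may also
be taken to absorb the content of `P`.

A component of the deformed zero locus through an isolated zero of `f` cannot lie in the fibre
`t = 0`: it would then be a single point, while the system has only as many equations as there are
variables other than `t`. So it dominates the `t`-line, the factor from `K[t]` can be cancelled on
it, and the primitive relation survives at `t = 0`. Taking for `u` a linear form which separates the
isolated zeros turns it into a nonzero polynomial of degree at most `∏ d i` in one variable, whose
roots count them.
-/

open MvPolynomial Module

section NormalForms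

variable {R σ : Type*} [CommRing R]

variable (R) in
/-- The polynomials of degree less than `d i` in each variable `X i`: the normal forms modulo the
pure powers `X i ^ d i`. -/
noncomputable def restrictDegreesLT (d : σ → ℕ) : Submodule R (MvPolynomial σ R) :=
  restrictSupport R {a | ∀ i, a i < d i}

variable (R) in
/-- The basis of `restrictDegreesLT R d` consisting of its monomials, indexed by their exponents. -/
noncomputable def basisRestrictDegreesLT [Finite σ] (d : σ → ℕ) :
    Basis (∀ i, Fin (d i)) R (restrictDegreesLT R d) :=
  (basisRestrictSupport R {a : σ →₀ ℕ | ∀ i, a i < d i}).reindex <|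
    (Finsupp.equivFunOnFinite.subtypeEquiv fun _ => Iff.rfl).trans <|
      (Equiv.subtypePiEquivPi (p := fun i k => k < d i)).trans <|
        Equiv.piCongrRight fun _ => Fin.equivSubtype.symm

instance [Finite σ] (d : σ → ℕ) : Module.Finite R (restrictDegreesLT R d) :=
  .of_basis (basisRestrictDegreesLT R d)

lemma finrank_restrictDegreesLT [StrongRankCondition R] [Fintype σ] (d : σ → ℕ) :
    finrank R (restrictDegreesLT R d) = ∏ i, d i := by
  classical
  rw [finrank_eq_card_basis (basisRestrictDegreesLT R d)]
  simp

lemma restrictTotalDegree_le_sup_smul (d : σ → ℕ) (g : σ → MvPolynomial σ R)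
    (hg : ∀ i, (g i).totalDegree ≤ d i) (τ : R) (D : ℕ) :
    restrictTotalDegree σ R D ≤ (restrictDegreesLT R d ⊔
      (Ideal.span (Set.range fun i => X i ^ d i + τ • g i)).restrictScalars R) ⊔
        Ideal.span {τ} • restrictTotalDegree σ R D := by
  nth_rw 1 [restrictTotalDegree]
  rw [restrictSupport_eq_span, Submodule.span_le]
  rintro _ ⟨a, ha, rfl⟩
  by_cases hred : ∀ i, a i < d i
  · exact Submodule.mem_sup_left (Submodule.mem_sup_left
      ((monomial_mem_restrictSupport R).2 (Or.inl hred)))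
  obtain ⟨i, hi⟩ : ∃ i, d i ≤ a i := by simpa using hred
  obtain ⟨b, rfl⟩ := exists_add_of_le (Finsupp.single_le_iff.2 hi)
  have hrewrite : monomial (Finsupp.single i (d i) + b) (1 : R) =
      monomial b 1 * (X i ^ d i + τ • g i) + τ • -(monomial b 1 * g i) := by
    rw [mul_add, X_pow_eq_monomial, monomial_mul, add_comm b]
    simp
  have hdeg : (monomial b 1 * g i).totalDegree ≤ D := by
    have hab : d i + b.degree ≤ D := by
      rw [← Finsupp.degree_single i (d i), ← map_add]
      exact ha
    have hb : (monomial b (1 : R)).totalDegree ≤ b.degree := totalDegree_monomial_le _ _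
    have := totalDegree_mul (monomial b 1) (g i)
    have := hg i
    lia
  beta_reduce
  rw [hrewrite]
  refine Submodule.add_mem_sup (Submodule.mem_sup_right ?_) ?_
  · exact Ideal.mul_mem_left _ _ (Ideal.subset_span ⟨i, rfl⟩)
  · exact Submodule.smul_mem_smul (Ideal.mem_span_singleton_self τ)
      (Submodule.neg_mem _ ((mem_restrictTotalDegree ..).2 hdeg))

lemma exists_smul_mem_sup_of_totalDegree_le [Finite σ] (d : σ → ℕ) (g : σ → MvPolynomial σ R)
    (hg : ∀ i, (g i).totalDegree ≤ d i) (τ : R) (D : ℕ) :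
    ∃ r : R, r - 1 ∈ Ideal.span {τ} ∧ ∀ h : MvPolynomial σ R, h.totalDegree ≤ D →
      r • h ∈ restrictDegreesLT R d ⊔
        (Ideal.span (Set.range fun i => X i ^ d i + τ • g i)).restrictScalars R := by
  obtain ⟨r, hr, hle⟩ := Submodule.exists_sub_one_mem_and_smul_le_of_fg_of_le_sup
    (Module.Finite.iff_fg.1 inferInstance) le_rfl (restrictTotalDegree_le_sup_smul d g hg τ D)
  exact ⟨r, hr, fun h hh =>
    hle (Submodule.smul_mem_pointwise_smul _ _ _ ((mem_restrictTotalDegree ..).2 hh))⟩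

end NormalForms

lemma exists_ne_zero_smul_aeval_eq_zero {R B : Type*} [CommRing R] [Nontrivial R] [Ring B]
    [Algebra R B] (N : Submodule R B) [Module.Finite R N] (u : B) (r : R)
    (h : ∀ j ≤ finrank R N, r • u ^ j ∈ N) :
    ∃ P : Polynomial R, P ≠ 0 ∧ P.natDegree ≤ finrank R N ∧ r • Polynomial.aeval u P = 0 := by
  have hdeg (P : Polynomial.degreeLT R (finrank R N + 1)) :
      (P : Polynomial R).natDegree ≤ finrank R N :=
    Polynomial.natDegree_le_iff_coeff_eq_zero.2
      ((Polynomial.degree_lt_iff_coeff_zero _ _).1 (Polynomial.mem_degreeLT.1 P.2))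
  have hmem (P : Polynomial.degreeLT R (finrank R N + 1)) :
      r • Polynomial.aeval u (P : Polynomial R) ∈ N := by
    rw [Polynomial.aeval_eq_sum_range' (Nat.lt_succ_of_le (hdeg P)), Finset.smul_sum]
    refine N.sum_mem fun j hj => ?_
    rw [smul_comm]
    exact N.smul_mem _ (h j (Finset.mem_range_succ_iff.1 hj))
  let φ : Polynomial.degreeLT R (finrank R N + 1) →ₗ[R] N :=
    ((r • (Polynomial.aeval u).toLinearMap).domRestrict _).codRestrict N hmem
  have hφ : ¬ Function.Injective φ := fun hinj => by
    have := LinearMap.finrank_le_finrank_of_injective hinj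
    simp [finrank_eq_card_basis (Polynomial.degreeLT.basis R _)] at this
  obtain ⟨P, hP, hP0⟩ : ∃ P, φ P = 0 ∧ P ≠ 0 := by
    simpa [injective_iff_map_eq_zero] using hφ
  refine ⟨P, by simpa using hP0, hdeg P, congrArg Subtype.val hP⟩

lemma ker_eval₂Hom_isMaximal {R K σ : Type*} [CommRing R] [Field K] {ε : R →+* K}
    (hε : Function.Surjective ε) (z : σ → K) : (RingHom.ker (eval₂Hom ε z)).IsMaximal :=
  RingHom.ker_isMaximal_of_surjective _ fun k => (hε k).imp' C fun r hr => by simpa using hr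

lemma height_ker_eval₂Hom {R K σ : Type*} [CommRing R] [IsNoetherianRing R] [Field K] [Finite σ]
    {ε : R →+* K} (hε : Function.Surjective ε) (z : σ → K) :
    (RingHom.ker (eval₂Hom ε z)).height = (RingHom.ker ε).height + Nat.card σ := by
  induction σ using Finite.induction_empty_option with
  | @of_equiv σ τ e ih =>
    have hcomap : RingHom.ker (eval₂Hom ε (z ∘ e)) =
        (RingHom.ker (eval₂Hom ε z)).comap (renameEquiv R e).toRingEquiv := by
      ext p
      simp [RingHom.mem_ker, eval₂_rename]
    rw [← Nat.card_congr e, ← ih (z ∘ e), hcomap, RingEquiv.height_comap]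
  | h_empty =>
    let e := (isEmptyRingEquiv R PEmpty).symm
    have hcomap : (RingHom.ker (eval₂Hom ε z)).comap e = RingHom.ker ε := by
      ext p
      rw [Ideal.mem_comap, RingHom.mem_ker, RingHom.mem_ker]
      exact Eq.congr_left (eval₂Hom_C ε z p)
    rw [← RingEquiv.height_comap e, hcomap]
    simp
  | @h_option σ _ ih =>
    let e := (optionEquivLeft R σ).symm.toRingEquiv
    let P := (RingHom.ker (eval₂Hom ε z)).comap e
    have : P.IsMaximal :=
      have := ker_eval₂Hom_isMaximal hε z
      Ideal.comap_isMaximal_of_equiv e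
    have hrestrict : (eval₂Hom ε z).comp
        ((e : _ →+* MvPolynomial (Option σ) R).comp Polynomial.C) = eval₂Hom ε (z ∘ some) :=
      ringHom_ext (by simp [e]) (by simp [e])
    have : P.LiesOver (RingHom.ker (eval₂Hom ε (z ∘ some))) := ⟨by
      rw [← hrestrict]
      rfl⟩
    rw [← RingEquiv.height_comap e, Polynomial.height_eq_height_add_one
      (RingHom.ker (eval₂Hom ε (z ∘ some))) P, ih, Finite.card_option, Nat.cast_add, Nat.cast_one,
      add_assoc]

section IsolatedZeros

variable {K σ : Type*} [Field K]

/-- The isolated zeros of `I` with coordinates in `K`: the points that form an irreducible component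
of the zero locus by themselves. This is encoded by minimal primes instead of a topology on points,
so that it is the right notion also when `K` is not algebraically closed. -/
def isolatedZeros (I : Ideal (MvPolynomial σ K)) : Set (σ → K) :=
  {z | vanishingIdeal K {z} ∈ I.minimalPrimes}

lemma vanishingIdeal_singleton_le {z : σ → K} {p : Ideal (MvPolynomial σ K)}
    (hp : ∀ i, X i - C (z i) ∈ p) : vanishingIdeal K {z} ≤ p := by
  have hmk : Ideal.Quotient.mkₐ K p = (Algebra.ofId K _).comp (aeval z) :=
    algHom_ext fun i => by
      simpa [Algebra.ofId_apply] using! Ideal.Quotient.eq.2 (hp i)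
  intro h hh
  rw [mem_vanishingIdeal_singleton_iff] at hh
  rw [← Ideal.Quotient.eq_zero_iff_mem, ← Ideal.Quotient.mkₐ_eq_mk K, hmk, AlgHom.comp_apply, hh,
    map_zero]

lemma vanishingIdeal_singleton_injective :
    Function.Injective fun z : σ → K => vanishingIdeal K {z} := by
  intro w z h
  funext i
  have hmem : (X i - C (w i)) ∈ vanishingIdeal K {z} := by
    rw [← show vanishingIdeal K {w} = vanishingIdeal K {z} from h]
    simp
  simpa [sub_eq_zero, eq_comm] using hmem

lemma zeroLocus_subset_isolatedZeros_of_finite [IsAlgClosed K] [Finite σ]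
    {I : Ideal (MvPolynomial σ K)} (hI : (zeroLocus K I).Finite) :
    zeroLocus K I ⊆ isolatedZeros I := by
  intro z hz
  refine ⟨⟨inferInstance, le_zeroLocus_iff_le_vanishingIdeal.1 (by simpa using hz)⟩, ?_⟩
  rintro q ⟨hq, hIq⟩ hqz
  have hinf : hI.toFinset.inf (fun w => vanishingIdeal K {w}) ≤ q := by
    rw [← IsPrime.vanishingIdeal_zeroLocus (K := K) q]
    intro h hh w hw
    exact Submodule.mem_finsetInf.1 hh w (hI.mem_toFinset.2 (zeroLocus_anti_mono hIq hw)) w rfl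
  obtain ⟨w, -, hwq⟩ := (Ideal.IsPrime.inf_le' hq).1 hinf
  have hwz : vanishingIdeal K {w} = vanishingIdeal K {z} :=
    Ideal.IsMaximal.eq_of_le inferInstance Ideal.IsPrime.ne_top' (hwq.trans hqz)
  exact hwz ▸ hwq

lemma algebraMap_comp_mem_isolatedZeros_map {L : Type*} [Field L] [Algebra K L]
    {I : Ideal (MvPolynomial σ K)} {z : σ → K} (hz : z ∈ isolatedZeros I) :
    algebraMap K L ∘ z ∈ isolatedZeros (I.map (map (algebraMap K L))) := by
  have hcomap : (vanishingIdeal L {algebraMap K L ∘ z}).comap (map (algebraMap K L)) =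
      vanishingIdeal K {z} := by
    ext h
    simp [aeval_eq_eval, eval_map, ← eval₂_comp]
  refine ⟨⟨inferInstance, Ideal.map_le_iff_le_comap.2 (hcomap ▸ hz.1.2)⟩, ?_⟩
  rintro q ⟨hq, hIq⟩ hqz
  have hzq : vanishingIdeal K {z} ≤ q.comap (map (algebraMap K L)) :=
    hz.2 ⟨inferInstance, Ideal.map_le_iff_le_comap.1 hIq⟩ (hcomap ▸ Ideal.comap_mono hqz)
  refine vanishingIdeal_singleton_le fun i => ?_
  have : (X i - C (z i)) ∈ vanishingIdeal K {z} := by simp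
  simpa using hzq this

end IsolatedZeros

section Specialization

variable {R K σ : Type*} [CommRing R] [Field K] {ε : R →+* K}

lemma comap_map_vanishingIdeal_singleton (ε : R →+* K) (z : σ → K) :
    (vanishingIdeal K {z}).comap (map ε) = RingHom.ker (eval₂Hom ε z) := by
  ext h
  simp [RingHom.mem_ker, aeval_eq_eval, eval_map]

lemma comap_C_eq_bot_of_mem_isolatedZeros [IsDomain R] [IsNoetherianRing R]
    [Ring.DimensionLEOne R] [Finite σ] (hε : Function.Surjective ε) (hker : RingHom.ker ε ≠ ⊥)
    {F : σ → MvPolynomial σ R} {z : σ → K}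
    (hz : z ∈ isolatedZeros ((Ideal.span (Set.range F)).map (map ε)))
    {p : Ideal (MvPolynomial σ R)} (hp : p ∈ (Ideal.span (Set.range F)).minimalPrimes)
    (hpz : p ≤ RingHom.ker (eval₂Hom ε z)) : p.comap C = ⊥ := by
  -- Otherwise `p` contains `ker ε`, so isolatedness makes it the maximal ideal of the point `z` of
  -- the fibre, whose height exceeds the number of generators.
  by_contra hbot
  have := hp.1.1
  have hle : p.comap C ≤ RingHom.ker ε := by
    refine (Ideal.comap_mono hpz).trans_eq ?_
    ext r
    simp [RingHom.mem_ker]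
  have hpε : p.comap C = RingHom.ker ε :=
    (Ideal.IsPrime.isMaximal inferInstance hbot).eq_of_le (RingHom.ker_ne_top ε) hle
  have hkerp : RingHom.ker (map ε) ≤ p := by
    rw [ker_map, ← hpε]
    exact Ideal.map_comap_le
  have hpeq : p = RingHom.ker (eval₂Hom ε z) := by
    refine hpz.antisymm ?_
    rw [← comap_map_vanishingIdeal_singleton]
    refine (Ideal.minimalPrimes_comap_of_surjective (map_surjective ε hε) hz).2 ⟨‹_›, ?_⟩ ?_
    · rw [Ideal.comap_map_of_surjective' _ (map_surjective ε hε)]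
      exact sup_le hp.1.2 hkerp
    · rwa [comap_map_vanishingIdeal_singleton]
  have hkrull : p.height ≤ Nat.card σ :=
    (Ideal.height_le_card_of_mem_minimalPrimes_span (Set.finite_range F) hp).trans
      (by
        rw [← Nat.card_coe_set_eq]
        exact_mod_cast Finite.card_range_le F)
  have hpos : 1 ≤ (RingHom.ker ε).height := by
    rwa [Order.one_le_iff_ne_zero, ne_eq, Ideal.height_eq_zero_iff_eq_bot]
  rw [hpeq, height_ker_eval₂Hom hε] at hkrull
  have := (add_le_add_left hpos _).trans hkrull
  norm_cast at this
  lia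

lemma eval₂_eq_zero_of_C_mul_mem_span [IsDomain R] [IsNoetherianRing R]
    [Ring.DimensionLEOne R] [Finite σ] (hε : Function.Surjective ε) (hker : RingHom.ker ε ≠ ⊥)
    {F : σ → MvPolynomial σ R} {z : σ → K}
    (hz : z ∈ isolatedZeros ((Ideal.span (Set.range F)).map (map ε)))
    {c : R} (hc : c ≠ 0) {h : MvPolynomial σ R} (hmem : C c * h ∈ Ideal.span (Set.range F)) :
    eval₂ ε z h = 0 := by
  have hle : Ideal.span (Set.range F) ≤ RingHom.ker (eval₂Hom ε z) := by
    rw [← comap_map_vanishingIdeal_singleton, ← Ideal.map_le_iff_le_comap]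
    exact hz.1.2
  have := RingHom.ker_isPrime (eval₂Hom ε z)
  obtain ⟨p, hp, hpz⟩ := Ideal.exists_minimalPrimes_le hle
  have hcp : C c ∉ p := fun hcp => hc <| by
    rwa [← Ideal.mem_comap, comap_C_eq_bot_of_mem_isolatedZeros hε hker hz hp hpz] at hcp
  exact hpz ((hp.1.1.mem_or_mem (hp.1.2 hmem)).resolve_left hcp)

end Specialization

lemma totalDegree_map_le {R S σ : Type*} [CommSemiring R] [CommSemiring S] (φ : R →+* S)
    (p : MvPolynomial σ R) : (map φ p).totalDegree ≤ p.totalDegree :=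
  Finset.sup_mono (support_map_subset φ p)

lemma exists_smul_aeval_mem_span {R σ : Type*} [CommRing R] [Nontrivial R] [Fintype σ]
    (d : σ → ℕ) (g : σ → MvPolynomial σ R) (hg : ∀ i, (g i).totalDegree ≤ d i) (τ : R)
    (u : MvPolynomial σ R) :
    ∃ r : R, r - 1 ∈ Ideal.span {τ} ∧ ∃ P : Polynomial R, P ≠ 0 ∧ P.natDegree ≤ ∏ i, d i ∧
      r • Polynomial.aeval u P ∈ Ideal.span (Set.range fun i => X i ^ d i + τ • g i) := by
  set I := Ideal.span (Set.range fun i => X i ^ d i + τ • g i)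
  obtain ⟨r, hr, hrmem⟩ :=
    exists_smul_mem_sup_of_totalDegree_le d g hg τ ((∏ i, d i) * u.totalDegree)
  let π : MvPolynomial σ R →ₐ[R] MvPolynomial σ R ⧸ I := Ideal.Quotient.mkₐ R I
  let N := (restrictDegreesLT R d).map π.toLinearMap
  have hNrank : finrank R N ≤ ∏ i, d i :=
    (Submodule.finrank_map_le _ _).trans_eq (finrank_restrictDegreesLT d)
  have hmem : ∀ j ≤ finrank R N, r • π u ^ j ∈ N := by
    intro j hj
    obtain ⟨v, hv, w, hw, hvw⟩ := Submodule.mem_sup.1 <| hrmem (u ^ j) <|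
      (totalDegree_pow u j).trans (Nat.mul_le_mul_right _ (hj.trans hNrank))
    refine ⟨v, hv, ?_⟩
    have hπw : π w = 0 := Ideal.Quotient.eq_zero_iff_mem.2 hw
    rw [← map_pow, ← map_smul, ← hvw, map_add, hπw, add_zero]
    rfl
  obtain ⟨P, hP, hPdeg, hPr⟩ := exists_ne_zero_smul_aeval_eq_zero N (π u) r hmem
  refine ⟨r, hr, P, hP, hPdeg.trans hNrank, Ideal.Quotient.eq_zero_iff_mem.1 ?_⟩
  rwa [Polynomial.aeval_algHom_apply, ← map_smul] at hPr

lemma map_constantCoeff_map_C {R σ : Type*} [CommSemiring R] (p : MvPolynomial σ R) :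
    map Polynomial.constantCoeff (map Polynomial.C p) = p := by
  have hid : Polynomial.constantCoeff.comp Polynomial.C = RingHom.id R :=
    RingHom.ext fun _ => Polynomial.coeff_C_zero
  rw [map_map, hid, map_id]

lemma map_ne_zero_of_isPrimitive {R S : Type*} [CommRing R] [CommRing S] {ε : R →+* S}
    {a : R} (ha : ¬ IsUnit a) (hker : RingHom.ker ε ≤ Ideal.span {a}) {P : Polynomial R}
    (hP : P.IsPrimitive) : P.map ε ≠ 0 := fun h =>
  ha <| hP a <| (Polynomial.C_dvd_iff_dvd_coeff a P).2 fun j => by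
    refine Ideal.mem_span_singleton.1 (hker ?_)
    rw [RingHom.mem_ker, ← Polynomial.coeff_map, h, Polynomial.coeff_zero]

section Homotopy

variable {R σ : Type*} [CommRing R]

/-- The straight-line homotopy, with parameter `t = Polynomial.X`, from the system `f` at `t = 0` to
the system of pure powers `X i ^ (f i).totalDegree` at `t = 1`. It is written as a perturbation of
the latter, with perturbation parameter `1 - t`. -/
noncomputable def homotopyToPowers (f : σ → MvPolynomial σ R) (i : σ) :
    MvPolynomial σ (Polynomial R) :=
  X i ^ (f i).totalDegree +
    (1 - Polynomial.X : Polynomial R) • (map Polynomial.C (f i) - X i ^ (f i).totalDegree)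

lemma map_constantCoeff_homotopyToPowers (f : σ → MvPolynomial σ R) (i : σ) :
    map Polynomial.constantCoeff (homotopyToPowers f i) = f i := by
  simp [homotopyToPowers, smul_eq_C_mul, map_constantCoeff_map_C]

lemma map_span_homotopyToPowers (f : σ → MvPolynomial σ R) :
    (Ideal.span (Set.range (homotopyToPowers f))).map (map Polynomial.constantCoeff) =
      Ideal.span (Set.range f) := by
  rw [Ideal.map_span, ← Set.range_comp]
  exact congrArg (fun F => Ideal.span (Set.range F))
    (funext (map_constantCoeff_homotopyToPowers f))

lemma exists_smul_aeval_mem_span_homotopyToPowers [Nontrivial R] [Fintype σ]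
    (f : σ → MvPolynomial σ R) (u : MvPolynomial σ (Polynomial R)) :
    ∃ r : Polynomial R, r ≠ 0 ∧ ∃ P : Polynomial (Polynomial R), P ≠ 0 ∧
      P.natDegree ≤ ∏ i, (f i).totalDegree ∧
      r • Polynomial.aeval u P ∈ Ideal.span (Set.range (homotopyToPowers f)) := by
  obtain ⟨r, hr, hP⟩ := exists_smul_aeval_mem_span (fun i => (f i).totalDegree)
    (fun i => map Polynomial.C (f i) - X i ^ (f i).totalDegree)
    (fun i => (totalDegree_sub _ _).trans (max_le (totalDegree_map_le _ _) (by simp)))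
    (1 - Polynomial.X : Polynomial R) u
  refine ⟨r, ?_, hP⟩
  rintro rfl
  obtain ⟨s, hs⟩ := Ideal.mem_span_singleton.1 hr
  simpa using congrArg (Polynomial.eval 1) hs

lemma eval₂_polynomial_aeval {R S σ : Type*} [CommSemiring R] [CommSemiring S] (ε : R →+* S)
    (z : σ → S) (v : MvPolynomial σ R) (Q : Polynomial R) :
    eval₂ ε z (Polynomial.aeval v Q) = (Q.map ε).eval (eval₂ ε z v) := by
  have hcomp : (eval₂Hom ε z).comp (algebraMap R (MvPolynomial σ R)) = ε :=
    RingHom.ext (eval₂_C ε z)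
  have := Polynomial.hom_eval₂ Q (algebraMap R (MvPolynomial σ R)) (eval₂Hom ε z) v
  rwa [hcomp, ← Polynomial.eval_map (f := ε), ← Polynomial.aeval_def] at this

theorem exists_eval_eq_zero_of_mem_isolatedZeros {K σ : Type*} [Field K] [Fintype σ]
    (f : σ → MvPolynomial σ K) (u : MvPolynomial σ K) :
    ∃ Q : Polynomial K, Q ≠ 0 ∧ Q.natDegree ≤ ∏ i, (f i).totalDegree ∧
      ∀ z ∈ isolatedZeros (Ideal.span (Set.range f)), Q.eval (eval z u) = 0 := by
  obtain ⟨r, hr, P, hP, hdeg, hmem⟩ :=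
    exists_smul_aeval_mem_span_homotopyToPowers f (map Polynomial.C u)
  let := Classical.arbitrary (NormalizedGCDMonoid (Polynomial K))
  have hε : Function.Surjective (Polynomial.constantCoeff (R := K)) :=
    Polynomial.constantCoeff_surjective
  have hker : RingHom.ker (Polynomial.constantCoeff (R := K)) = Ideal.span {Polynomial.X} :=
    Polynomial.ker_constantCoeff
  refine ⟨P.primPart.map Polynomial.constantCoeff,
    map_ne_zero_of_isPrimitive Polynomial.not_isUnit_X hker.le P.isPrimitive_primPart,
    Polynomial.natDegree_map_le.trans (P.natDegree_primPart.trans_le hdeg), fun z hz => ?_⟩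
  rw [← map_span_homotopyToPowers] at hz
  have hprim : C (r * P.content) * Polynomial.aeval (map Polynomial.C u) P.primPart ∈
      Ideal.span (Set.range (homotopyToPowers f)) := by
    rw [P.eq_C_content_mul_primPart] at hmem
    simpa [smul_eq_C_mul, mul_assoc, algebraMap_eq] using hmem
  have hu : eval₂ Polynomial.constantCoeff z (map Polynomial.C u) = eval z u := by
    rw [← eval_map, map_constantCoeff_map_C]
  calc (P.primPart.map Polynomial.constantCoeff).eval (eval z u)
      = eval₂ Polynomial.constantCoeff z (Polynomial.aeval (map Polynomial.C u) P.primPart) := by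
        rw [eval₂_polynomial_aeval, hu]
    _ = 0 := eval₂_eq_zero_of_C_mul_mem_span hε (by simp [hker]) hz
        (mul_ne_zero hr (Polynomial.content_eq_zero_iff.not.2 hP)) hprim

end Homotopy

section Counting

variable {K σ : Type*} [Field K]

lemma finite_isolatedZeros [Finite σ] (I : Ideal (MvPolynomial σ K)) :
    (isolatedZeros I).Finite :=
  (Ideal.finite_minimalPrimes_of_isNoetherianRing _ I).preimage
    vanishingIdeal_singleton_injective.injOn

lemma exists_injOn_eval [Infinite K] [Finite σ] {S : Set (σ → K)} (hS : S.Finite) :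
    ∃ u : MvPolynomial σ K, S.InjOn fun z => eval z u := by
  classical
  have := Fintype.ofFinite σ
  have := hS.offDiag.to_subtype
  obtain ⟨φ, hφ⟩ := Module.exists_dual_forall_apply_ne_zero (K := K)
    (fun w : S.offDiag => w.1.1 - w.1.2) fun w => sub_ne_zero.2 w.2.2.2
  refine ⟨∑ i, C (φ (Pi.single i 1)) * X i, fun z hz w hw hzw => ?_⟩
  by_contra hne
  refine hφ ⟨(z, w), hz, hw, hne⟩ ?_
  have heval (v : σ → K) : eval v (∑ i, C (φ (Pi.single i 1)) * X i) = φ v := by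
    simp [LinearMap.pi_apply_eq_sum_univ φ v, mul_comm, ← Pi.single_apply, ← Pi.single_comm]
  rw [map_sub, ← heval, ← heval, sub_eq_zero]
  exact hzw

lemma encard_isolatedZeros_le_of_infinite [Infinite K] [Fintype σ] (f : σ → MvPolynomial σ K) :
    (isolatedZeros (Ideal.span (Set.range f))).encard ≤ ∏ i, (f i).totalDegree := by
  obtain ⟨u, hu⟩ := exists_injOn_eval (finite_isolatedZeros (Ideal.span (Set.range f)))
  obtain ⟨Q, hQ, hdeg, hroot⟩ := exists_eval_eq_zero_of_mem_isolatedZeros f u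
  calc (isolatedZeros (Ideal.span (Set.range f))).encard
      = ((fun z => eval z u) '' isolatedZeros (Ideal.span (Set.range f))).encard :=
        hu.encard_image.symm
    _ ≤ (Q.rootSet K).encard := Set.encard_le_encard <| Set.image_subset_iff.2 fun z hz =>
        (Polynomial.mem_rootSet_of_ne hQ).2 (by simpa using hroot z hz)
    _ ≤ ∏ i, (f i).totalDegree := by
      rw [← (Q.rootSet_finite K).cast_ncard_eq]
      exact_mod_cast (Q.ncard_rootSet_le K).trans hdeg

theorem bezout_degree_product_general [Fintype σ] (f : σ → MvPolynomial σ K) :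
    (isolatedZeros (Ideal.span (Set.range f))).encard ≤ ∏ i, (f i).totalDegree := by
  let L := AlgebraicClosure K
  have hinj : Function.Injective fun z : σ → K => algebraMap K L ∘ z :=
    (algebraMap K L).injective.comp_left
  calc (isolatedZeros (Ideal.span (Set.range f))).encard
      = ((fun z => algebraMap K L ∘ z) '' isolatedZeros (Ideal.span (Set.range f))).encard :=
        (hinj.encard_image _).symm
    _ ≤ (isolatedZeros (Ideal.span (Set.range fun i => map (algebraMap K L) (f i)))).encard := by
      refine Set.encard_le_encard (Set.image_subset_iff.2 fun z hz => ?_)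
      have := algebraMap_comp_mem_isolatedZeros_map (L := L) hz
      rwa [Ideal.map_span, ← Set.range_comp] at this
    _ ≤ ∏ i, (map (algebraMap K L) (f i)).totalDegree := encard_isolatedZeros_le_of_infinite _
    _ ≤ ∏ i, (f i).totalDegree :=
      mod_cast Finset.prod_le_prod' fun i _ => totalDegree_map_le _ _

end Counting

/-- Bézout's theorem (geometric form, 1779): over an algebraically closed field,
`n` nonzero polynomials in `n` variables with a finite common zero set have at most
`∏ totalDegree` common zeros. -/
theorem bezout_degree_product {K : Type*} [Field K] [IsAlgClosed K] (n : ℕ) (hn : 1 ≤ n)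
    (f : Fin n → MvPolynomial (Fin n) K) (hf : ∀ i, f i ≠ 0)
    (hZ : {p : Fin n → K | ∀ i, MvPolynomial.eval p (f i) = 0}.Finite) :
    {p : Fin n → K | ∀ i, MvPolynomial.eval p (f i) = 0}.ncard ≤
      ∏ i, (f i).totalDegree := by
  have hlocus : {p : Fin n → K | ∀ i, eval p (f i) = 0} =
      zeroLocus K (Ideal.span (Set.range f)) := by
    simp [zeroLocus_span, aeval_eq_eval]
  rw [hlocus] at hZ ⊢
  rw [← Nat.cast_le (α := ℕ∞), hZ.cast_ncard_eq]
  exact (Set.encard_le_encard (zeroLocus_subset_isolatedZeros_of_finite hZ)).trans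
    (bezout_degree_product_general f)
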